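/- arXiv:2401.09926 — 3 statements merged into one kernel-verified Lean document; each statement's English description precedes it below -/
import Mathlib

section
/- For every dimension N ≥ 1 and every σ ∈ (0,2), the function t ↦ (1 − G(0,t))·t^{-1-σ/2} is Lebesgue integrable on (0,∞) and ∫_0^∞ (1 − G(0,t)) t^{-1-σ/2} dt is strictly positive; here 0 ≤ G(0,t) ≤ 1 for all t ≥ 0 and G(0,t) < 1 for t > 0. -/
/-!
Write `b t = I_0(2t) = ∑ (t^k/k!)^2`, so that `G(0,t) = e^{-2Nt} b(t)^N`. For `t > 0` each factor
`t^k/k!` is a single term of the exponential series, hence at most `e^t` (strictly less for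
`k = 0`); replacing one of the two factors by `e^t` gives `b t < e^{2t}`, that is `G(0,t) < 1`.
The constant term gives `b t ≥ 1`, hence `G(0,t) ≥ e^{-2Nt} ≥ 1 - 2Nt`. Consequently the integrand
is positive, bounded by `2N t^{-σ/2}` on `(0,1]` and by `t^{-1-σ/2}` on `(1,∞)`; these
are integrable because `σ < 2` and `σ > 0` respectively.
-/

open MeasureTheory Real Set

/-- Modified Bessel function of the first kind of integer order `m`. -/
noncomputable def besselI (m : ℕ) (s : ℝ) : ℝ :=
  ∑' k : ℕ, (s / 2) ^ (2 * k + m) / ((Nat.factorial k : ℝ) * (Nat.factorial (k + m)))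

/-- `G(j,t) = e^{-2Nt} ∏_i I_{|j_i|}(2t)`. -/
noncomputable def G (N : ℕ) (j : Fin N → ℤ) (t : ℝ) : ℝ :=
  Real.exp (-(2 * (N : ℝ)) * t) * ∏ i, besselI (j i).natAbs (2 * t)

/-- The series for `I_0(2t)` as a sum of squares of terms of the exponential series. -/
lemma besselI_zero_two_mul (t : ℝ) :
    besselI 0 (2 * t) = ∑' k : ℕ, t ^ k / (k.factorial : ℝ) * (t ^ k / (k.factorial : ℝ)) := by
  unfold besselI
  congr 1
  ext k
  rw [mul_div_cancel_left₀ t two_ne_zero, add_zero, add_zero, two_mul, pow_add, div_mul_div_comm]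

lemma summable_exp_mul (t : ℝ) : Summable fun k : ℕ => Real.exp t * (t ^ k / (k.factorial : ℝ)) :=
  (Real.summable_pow_div_factorial t).mul_left _

lemma bessel_term_le {t : ℝ} (ht : 0 ≤ t) (k : ℕ) :
    t ^ k / (k.factorial : ℝ) * (t ^ k / (k.factorial : ℝ))
      ≤ Real.exp t * (t ^ k / (k.factorial : ℝ)) :=
  mul_le_mul_of_nonneg_right (Real.pow_div_factorial_le_exp t ht k) (by positivity)

lemma summable_bessel_term {t : ℝ} (ht : 0 ≤ t) :
    Summable fun k : ℕ => t ^ k / (k.factorial : ℝ) * (t ^ k / (k.factorial : ℝ)) :=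
  Summable.of_nonneg_of_le (fun k => by positivity) (bessel_term_le ht) (summable_exp_mul t)

lemma tsum_exp_mul (t : ℝ) :
    ∑' k : ℕ, Real.exp t * (t ^ k / (k.factorial : ℝ)) = Real.exp (2 * t) := by
  have h : ∑' k : ℕ, t ^ k / (k.factorial : ℝ) = Real.exp t := by
    rw [Real.exp_eq_exp_ℝ, NormedSpace.exp_eq_tsum_div]
  rw [tsum_mul_left, h, two_mul, Real.exp_add]

lemma one_le_besselI {t : ℝ} (ht : 0 ≤ t) : 1 ≤ besselI 0 (2 * t) := by
  rw [besselI_zero_two_mul]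
  simpa using (summable_bessel_term ht).le_tsum 0 (fun k _ => by positivity)

lemma besselI_lt_exp {t : ℝ} (ht : 0 < t) : besselI 0 (2 * t) < Real.exp (2 * t) := by
  rw [besselI_zero_two_mul, ← tsum_exp_mul]
  refine Summable.tsum_lt_tsum (i := 0) (bessel_term_le ht.le) ?_
    (summable_bessel_term ht.le) (summable_exp_mul t)
  -- The strict term is `k = 0`, where the claim reads `1 < exp t`.
  simpa using ht

/-- Monotonicity is what yields measurability of `G N 0` on `(0,∞)`, without any discussion of
continuity of the series. -/
lemma besselI_monotoneOn : MonotoneOn (fun t : ℝ => besselI 0 (2 * t)) (Ioi 0) := by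
  intro s hs t ht hst
  simp only [mem_Ioi] at hs ht
  simp only [besselI_zero_two_mul]
  refine Summable.tsum_le_tsum (fun k => ?_) (summable_bessel_term hs.le)
    (summable_bessel_term ht.le)
  gcongr

lemma G_zero_eq (N : ℕ) (t : ℝ) :
    G N 0 t = Real.exp (-(2 * (N : ℝ)) * t) * besselI 0 (2 * t) ^ N := by
  simp [G]

lemma exp_le_G {N : ℕ} {t : ℝ} (ht : 0 ≤ t) : Real.exp (-(2 * (N : ℝ)) * t) ≤ G N 0 t := by
  rw [G_zero_eq]
  exact le_mul_of_one_le_right (Real.exp_pos _).le (one_le_pow₀ (one_le_besselI ht))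

lemma G_nonneg {N : ℕ} {t : ℝ} (ht : 0 ≤ t) : 0 ≤ G N 0 t :=
  (Real.exp_pos _).le.trans (exp_le_G ht)

lemma G_lt_one {N : ℕ} (hN : 1 ≤ N) {t : ℝ} (ht : 0 < t) : G N 0 t < 1 := by
  have h : besselI 0 (2 * t) ^ N < Real.exp (2 * t) ^ N :=
    pow_lt_pow_left₀ (besselI_lt_exp ht) (zero_le_one.trans (one_le_besselI ht.le)) (by omega)
  rw [G_zero_eq]
  refine (mul_lt_mul_of_pos_left h (Real.exp_pos _)).trans_eq ?_
  rw [← Real.exp_nat_mul, ← Real.exp_add, Real.exp_eq_one_iff]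
  ring

lemma G_at_zero (N : ℕ) : G N 0 0 = 1 := by
  have h : besselI 0 (2 * 0) = 1 := by
    rw [besselI_zero_two_mul, tsum_eq_single 0 (fun k hk => by simp [hk])]
    simp
  rw [G_zero_eq, h]
  simp

lemma integrand_pos {N : ℕ} (hN : 1 ≤ N) (σ : ℝ) {t : ℝ} (ht : 0 < t) :
    0 < (1 - G N 0 t) * t ^ (-1 - σ / 2) :=
  mul_pos (sub_pos.2 (G_lt_one hN ht)) (Real.rpow_pos_of_pos ht _)

lemma aestronglyMeasurable_integrand (N : ℕ) (σ : ℝ) :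
    AEStronglyMeasurable (fun t : ℝ => (1 - G N 0 t) * t ^ (-1 - σ / 2))
      (volume.restrict (Ioi 0)) := by
  have hb := aemeasurable_restrict_of_monotoneOn (μ := volume) measurableSet_Ioi besselI_monotoneOn
  have hG : AEMeasurable (fun t : ℝ => G N 0 t) (volume.restrict (Ioi 0)) := by
    simp only [G_zero_eq]
    exact AEMeasurable.mul (by fun_prop) (hb.pow_const N)
  exact ((hG.const_sub 1).mul (by fun_prop)).aestronglyMeasurable

lemma integrableOn_integrand {N : ℕ} (hN : 1 ≤ N) {σ : ℝ} (hσ : σ ∈ Ioo (0 : ℝ) 2) :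
    IntegrableOn (fun t : ℝ => (1 - G N 0 t) * t ^ (-1 - σ / 2)) (Ioi 0) := by
  obtain ⟨h0, h2⟩ := hσ
  have hm := aestronglyMeasurable_integrand N σ
  rw [← Ioc_union_Ioi_eq_Ioi (zero_le_one (α := ℝ))]
  refine IntegrableOn.union ?_ ?_
  · have hi : IntegrableOn (fun t : ℝ => 2 * N * t ^ (-(σ / 2))) (Ioc 0 1) :=
      ((intervalIntegrable_iff_integrableOn_Ioc_of_le zero_le_one).1
        (intervalIntegral.intervalIntegrable_rpow' (by linarith))).const_mul _
    refine Integrable.mono' hi (hm.mono_set Ioc_subset_Ioi_self) ?_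
    filter_upwards [ae_restrict_mem measurableSet_Ioc] with t ht
    rw [Real.norm_of_nonneg (integrand_pos hN σ ht.1).le]
    have h1 : 1 - G N 0 t ≤ 2 * N * t := by
      have := Real.add_one_le_exp (-(2 * (N : ℝ)) * t)
      have := exp_le_G (N := N) ht.1.le
      linarith
    have h3 : t ^ (-(σ / 2)) = t * t ^ (-1 - σ / 2) := by
      rw [← Real.rpow_one_add' ht.1.le (by linarith)]
      congr 1
      ring
    rw [h3, ← mul_assoc]
    exact mul_le_mul_of_nonneg_right h1 (Real.rpow_nonneg ht.1.le _)
  · have hi : IntegrableOn (fun t : ℝ => t ^ (-1 - σ / 2)) (Ioi 1) :=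
      integrableOn_Ioi_rpow_of_lt (by linarith) one_pos
    refine Integrable.mono' hi (hm.mono_set (Ioi_subset_Ioi zero_le_one)) ?_
    filter_upwards [ae_restrict_mem measurableSet_Ioi] with t ht
    have ht0 : 0 < t := one_pos.trans ht
    rw [Real.norm_of_nonneg (integrand_pos hN σ ht0).le]
    refine mul_le_of_le_one_left (Real.rpow_nonneg ht0.le _) ?_
    linarith [G_nonneg (N := N) ht0.le]

/-- for every `N ≥ 1` and `σ ∈ (0,2)`, the function
`t ↦ (1 − G(0,t)) t^{-1-σ/2}` is integrable on `(0,∞)` with strictly positive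
integral; moreover `0 ≤ G(0,t) ≤ 1` for `t ≥ 0` and `G(0,t) < 1` for `t > 0`. -/
theorem stmt_2 (N : ℕ) (hN : 1 ≤ N) (σ : ℝ) (hσ : σ ∈ Set.Ioo (0 : ℝ) 2) :
    IntegrableOn (fun t : ℝ => (1 - G N 0 t) * t ^ (-1 - σ / 2)) (Set.Ioi 0) ∧
    0 < ∫ t in Set.Ioi (0 : ℝ), (1 - G N 0 t) * t ^ (-1 - σ / 2) ∧
    (∀ t : ℝ, 0 ≤ t → 0 ≤ G N 0 t ∧ G N 0 t ≤ 1) ∧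
    (∀ t : ℝ, 0 < t → G N 0 t < 1) := by
  have hi := integrableOn_integrand hN hσ
  refine ⟨hi, ?_, fun t ht => ⟨G_nonneg ht, ?_⟩, fun t ht => G_lt_one hN ht⟩
  · rw [setIntegral_pos_iff_support_of_nonneg_ae _ hi]
    · have hs : Ioi (0 : ℝ) ⊆
          Function.support (fun t : ℝ => (1 - G N 0 t) * t ^ (-1 - σ / 2)) :=
        fun t ht => (integrand_pos hN σ ht).ne'
      rw [inter_eq_self_of_subset_right hs, Real.volume_Ioi]
      exact ENNReal.zero_lt_top
    · filter_upwards [ae_restrict_mem measurableSet_Ioi] with t ht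
      exact (integrand_pos hN σ ht).le
  · rcases ht.eq_or_lt with rfl | ht
    · exact (G_at_zero N).le
    · exact (G_lt_one hN ht).le
end

section
/- For every dimension N ≥ 1, every σ ∈ (0,2) and every h > 0, the family of weights (κ_{σ,h,j})_{j ∈ ℤ^N \ {0}} is summable and ∑_{j ∈ ℤ^N \ {0}} κ_{σ,h,j} = h^{-σ}·|Γ(-σ/2)|^{-1}·∫_0^∞ (1 − G(0,t)) t^{-1-σ/2} dt; in particular the sum equals C_σ·h^{-σ} for a constant C_σ ∈ (0,∞) independent of h. -/
/-!
The Bessel functions are the coefficients of `e^t · e^t = ∑_{a,b} t^a t^b / (a! b!)` grouped by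
`a - b`, so `∑_{n ∈ ℤ} I_{|n|}(2t) = e^{2t}` for every real `t`. Taking products over the
coordinates, `∑_j G(j,t) = 1`, i.e. `∑_{j ≠ 0} G(j,t) = 1 - G(0,t)`. All terms are nonnegative for
`t ≥ 0`, so this identity can be integrated against `t^{-1-σ/2}` term by term as soon as
`(1 - G(0,t)) t^{-1-σ/2}` is integrable. Since `I_0 ≥ 1`, we have
`0 ≤ 1 - G(0,t) ≤ 1 - e^{-2Nt} ≤ 2Nt`, which gives integrability at `0`, while `1 - G(0,t) ≤ 1` gives
it at infinity. The constant is positive because `1 - G(0,t)` dominates the positive term at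
`j = (1,…,1)`.
-/

open MeasureTheory Real Set

/-- The weight `κ_{σ,h,j} = h^{-σ} |Γ(-σ/2)|⁻¹ ∫_0^∞ G(j,t) t^{-1-σ/2} dt`. -/
noncomputable def kappa (N : ℕ) (σ h : ℝ) (j : Fin N → ℤ) : ℝ :=
  h ^ (-σ) * |Real.Gamma (-σ / 2)|⁻¹ * ∫ t in Set.Ioi (0 : ℝ), G N j t * t ^ (-1 - σ / 2)

theorem summable_besselI (m : ℕ) (s : ℝ) :
    Summable fun k : ℕ =>
      (s / 2) ^ (2 * k + m) / ((Nat.factorial k : ℝ) * (Nat.factorial (k + m))) := by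
  have h := (Real.summable_pow_div_factorial ((s / 2) ^ 2)).norm.mul_left (|s / 2| ^ m)
  refine Summable.of_norm_bounded h fun k => ?_
  have h1 : (1 : ℝ) ≤ (Nat.factorial (k + m) : ℝ) := by exact_mod_cast Nat.factorial_pos _
  have h2 : (0 : ℝ) < (Nat.factorial k : ℝ) := by exact_mod_cast Nat.factorial_pos _
  have e : |s / 2| ^ m * ‖((s / 2) ^ 2) ^ k / (Nat.factorial k : ℝ)‖
      = |s / 2| ^ (2 * k + m) / (Nat.factorial k : ℝ) := by
    rw [norm_div, norm_pow, norm_pow, Real.norm_eq_abs, Real.norm_of_nonneg h2.le]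
    ring
  rw [e, norm_div, norm_pow, norm_mul, Real.norm_eq_abs, Real.norm_of_nonneg h2.le,
    Real.norm_of_nonneg (by linarith)]
  gcongr
  nlinarith

theorem measurable_besselI (m : ℕ) : Measurable (besselI m) := by
  refine measurable_of_tendsto_metrizable
    (f := fun n s => ∑ k ∈ Finset.range n,
      (s / 2) ^ (2 * k + m) / ((Nat.factorial k : ℝ) * (Nat.factorial (k + m))))
    (fun n => by fun_prop) ?_
  rw [tendsto_pi_nhds]
  exact fun s => (summable_besselI m s).hasSum.tendsto_sum_nat

theorem besselI_pos (m : ℕ) {s : ℝ} (hs : 0 < s) : 0 < besselI m s :=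
  (summable_besselI m s).tsum_pos (fun k => by positivity) 0 (by positivity)

theorem one_le_besselI_zero {s : ℝ} (hs : 0 ≤ s) : 1 ≤ besselI 0 s := by
  have h := (summable_besselI 0 s).le_tsum 0 (fun k _ => by positivity)
  simpa [besselI] using h

/-- Pairs of naturals, parametrized by their difference and their minimum. -/
def diffMinEquiv : ℤ × ℕ ≃ ℕ × ℕ where
  toFun p := (p.2 + p.1.toNat, p.2 + (-p.1).toNat)
  invFun q := ((q.1 : ℤ) - q.2, min q.1 q.2)
  left_inv := by rintro ⟨n, k⟩; ext <;> simp <;> omega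
  right_inv := by rintro ⟨a, b⟩; ext <;> simp <;> omega

/-- The generating function of the Bessel functions at `1`, obtained by regrouping the double
series of `e^t · e^t` along `a - b`. -/
theorem hasSum_besselI (t : ℝ) :
    HasSum (fun n : ℤ => besselI n.natAbs (2 * t)) (Real.exp (2 * t)) := by
  have h1 : HasSum (fun k : ℕ => t ^ k / (Nat.factorial k : ℝ)) (Real.exp t) := by
    rw [Real.exp_eq_exp_ℝ]
    exact NormedSpace.expSeries_div_hasSum_exp t
  have h2 := h1.mul h1 (summable_mul_of_summable_norm h1.summable.norm h1.summable.norm)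
  rw [← Real.exp_add, ← two_mul, ← diffMinEquiv.hasSum_iff] at h2
  refine HasSum.prod_fiberwise h2 fun n => ?_
  refine (summable_besselI n.natAbs (2 * t)).hasSum.congr_fun fun k => ?_
  rw [mul_div_cancel_left₀ t two_ne_zero]
  rcases le_total 0 n with hn | hn
  · lift n to ℕ using hn
    simp only [diffMinEquiv, Function.comp, Equiv.coe_fn_mk, Int.toNat_natCast,
      Int.toNat_neg_natCast, Int.natAbs_natCast, add_zero]
    ring
  · obtain ⟨n, rfl⟩ := Int.exists_eq_neg_ofNat hn
    simp only [diffMinEquiv, Function.comp, Equiv.coe_fn_mk, Int.toNat_natCast, neg_neg,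
      Int.toNat_neg_natCast, Int.natAbs_natCast, Int.natAbs_neg, add_zero]
    ring

theorem hasSum_prod_pow {f : ℤ → ℝ} {a : ℝ} (hf : HasSum f a) (N : ℕ) :
    HasSum (fun j : Fin N → ℤ => ∏ i, f (j i)) (a ^ N) := by
  induction N with
  | zero => simp
  | succ n ih =>
    have h : HasSum (fun p : ℤ × (Fin n → ℤ) => f p.1 * ∏ i, f (p.2 i)) (a ^ (n + 1)) := by
      rw [pow_succ']
      have hs := summable_mul_of_summable_norm (f := f)
        (g := fun j : Fin n → ℤ => ∏ i, f (j i)) hf.summable.norm ih.summable.norm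
      exact HasSum.mul (g := fun j : Fin n → ℤ => ∏ i, f (j i)) hf ih hs
    refine (Fin.consEquiv fun _ : Fin (n + 1) => ℤ).hasSum_iff.1 (h.congr_fun fun p => ?_)
    simp [Fin.prod_univ_succ, Fin.consEquiv]

theorem hasSum_G (N : ℕ) (t : ℝ) : HasSum (fun j : Fin N → ℤ => G N j t) 1 := by
  have h := (hasSum_prod_pow (hasSum_besselI t) N).mul_left (Real.exp (-(2 * (N : ℝ)) * t))
  rw [← Real.exp_nat_mul, ← Real.exp_add] at h
  have e : -(2 * (N : ℝ)) * t + N * (2 * t) = 0 := by ring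
  rwa [e, Real.exp_zero] at h

theorem hasSum_ne {α : Type*} {f : α → ℝ} {c : ℝ} (hf : HasSum f c) (a : α) :
    HasSum (fun j : {j : α // j ≠ a} => f j.1) (c - f a) := by
  classical
  have h := hf.update a 0
  rw [zero_sub, neg_add_eq_sub] at h
  refine (hasSum_subtype_iff_indicator (s := {j | j ≠ a})).2 (h.congr_fun fun j => ?_)
  by_cases hj : j = a <;> simp [hj, Set.indicator]

theorem hasSum_G_ne_zero (N : ℕ) (t : ℝ) :
    HasSum (fun j : {j : Fin N → ℤ // j ≠ 0} => G N j.1 t) (1 - G N 0 t) :=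
  hasSum_ne (f := fun j => G N j t) (hasSum_G N t) 0

theorem G_pos (N : ℕ) (j : Fin N → ℤ) {t : ℝ} (ht : 0 < t) : 0 < G N j t :=
  mul_pos (Real.exp_pos _) (Finset.prod_pos fun _ _ => besselI_pos _ (by linarith))

theorem measurable_G (N : ℕ) (j : Fin N → ℤ) : Measurable (G N j) := by
  unfold G
  refine Measurable.mul (by fun_prop) (Finset.measurable_fun_prod _ fun i _ => ?_)
  exact (measurable_besselI _).comp (by fun_prop)

theorem one_sub_G_zero_pos {N : ℕ} (hN : 1 ≤ N) {t : ℝ} (ht : 0 < t) : 0 < 1 - G N 0 t := by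
  have h := hasSum_G_ne_zero N t
  have hj : (fun _ => 1 : Fin N → ℤ) ≠ 0 := fun h0 => by
    simpa using congrFun h0 ⟨0, hN⟩
  rw [← h.tsum_eq]
  exact h.summable.tsum_pos (fun j => (G_pos N j.1 ht).le) ⟨_, hj⟩ (G_pos N _ ht)

theorem one_sub_G_zero_le (N : ℕ) {t : ℝ} (ht : 0 < t) : 1 - G N 0 t ≤ 2 * N * t := by
  have h1 : 1 ≤ ∏ i : Fin N, besselI ((0 : Fin N → ℤ) i).natAbs (2 * t) :=
    Finset.one_le_prod fun _ _ => one_le_besselI_zero (by linarith)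
  have h2 : Real.exp (-(2 * (N : ℝ)) * t) ≤ G N 0 t :=
    le_mul_of_one_le_right (Real.exp_pos _).le h1
  linarith [Real.add_one_le_exp (-(2 * (N : ℝ)) * t)]

theorem integrableOn_one_sub_G {N : ℕ} (hN : 1 ≤ N) {σ : ℝ} (hσ : σ ∈ Set.Ioo (0 : ℝ) 2) :
    IntegrableOn (fun t => (1 - G N 0 t) * t ^ (-1 - σ / 2)) (Set.Ioi 0) := by
  obtain ⟨h0, h2⟩ := hσ
  have hm : Measurable fun t => (1 - G N 0 t) * t ^ (-1 - σ / 2) :=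
    ((measurable_G N 0).const_sub 1).mul (by fun_prop)
  rw [← Set.Ioc_union_Ioi_eq_Ioi (zero_le_one (α := ℝ))]
  refine IntegrableOn.union ?_ ?_
  · have hi : IntegrableOn (fun t : ℝ => 2 * N * t ^ (-σ / 2)) (Set.Ioc 0 1) := by
      refine Integrable.const_mul ?_ _
      exact (intervalIntegrable_iff_integrableOn_Ioc_of_le zero_le_one).1
        (intervalIntegral.intervalIntegrable_rpow' (by linarith))
    refine Integrable.mono' hi hm.aestronglyMeasurable ?_
    refine (ae_restrict_iff' measurableSet_Ioc).2 (.of_forall fun t ht => ?_)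
    have hp : 0 < t ^ (-1 - σ / 2) := Real.rpow_pos_of_pos ht.1 _
    rw [Real.norm_of_nonneg (mul_nonneg (one_sub_G_zero_pos hN ht.1).le hp.le)]
    have e : t ^ (-σ / 2) = t * t ^ (-1 - σ / 2) := by
      rw [← Real.rpow_one_add' ht.1.le (by linarith)]
      congr 1; ring
    rw [e, ← mul_assoc]
    exact mul_le_mul_of_nonneg_right (one_sub_G_zero_le N ht.1) hp.le
  · refine Integrable.mono' (integrableOn_Ioi_rpow_of_lt (a := -1 - σ / 2) (by linarith)
      zero_lt_one) hm.aestronglyMeasurable ?_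
    refine (ae_restrict_iff' measurableSet_Ioi).2 (.of_forall fun t ht => ?_)
    have ht0 : 0 < t := lt_trans zero_lt_one ht
    have hp : 0 < t ^ (-1 - σ / 2) := Real.rpow_pos_of_pos ht0 _
    rw [Real.norm_of_nonneg (mul_nonneg (one_sub_G_zero_pos hN ht0).le hp.le)]
    exact mul_le_of_le_one_left hp.le (by linarith [G_pos N 0 ht0])

theorem hasSum_kappa {N : ℕ} (hN : 1 ≤ N) {σ : ℝ} (hσ : σ ∈ Set.Ioo (0 : ℝ) 2) (h : ℝ) :
    HasSum (fun j : {j : Fin N → ℤ // j ≠ 0} => kappa N σ h j.1)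
      (h ^ (-σ) * |Real.Gamma (-σ / 2)|⁻¹ *
          ∫ t in Set.Ioi (0 : ℝ), (1 - G N 0 t) * t ^ (-1 - σ / 2)) := by
  have hs (t : ℝ) := (hasSum_G_ne_zero N t).mul_right (t ^ (-1 - σ / 2))
  -- The terms are nonnegative on `t > 0`, so each one serves as its own dominating function.
  refine HasSum.mul_left _ (hasSum_integral_of_dominated_convergence
    (fun j t => G N j.1 t * t ^ (-1 - σ / 2)) (fun j => ?_) (fun j => ?_)
    (.of_forall fun t => (hs t).summable) ?_ (.of_forall hs))
  · exact ((measurable_G N j.1).mul (by fun_prop)).aestronglyMeasurable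
  · refine (ae_restrict_iff' measurableSet_Ioi).2 (.of_forall fun t ht => ?_)
    exact (Real.norm_of_nonneg
      (mul_nonneg (G_pos N j.1 ht).le (Real.rpow_nonneg (le_of_lt ht) _))).le
  · simp_rw [fun t => (hs t).tsum_eq]
    exact integrableOn_one_sub_G hN hσ

theorem integral_one_sub_G_pos {N : ℕ} (hN : 1 ≤ N) {σ : ℝ} (hσ : σ ∈ Set.Ioo (0 : ℝ) 2) :
    0 < ∫ t in Set.Ioi (0 : ℝ), (1 - G N 0 t) * t ^ (-1 - σ / 2) := by
  have hpos : ∀ t ∈ Set.Ioi (0 : ℝ), 0 < (1 - G N 0 t) * t ^ (-1 - σ / 2) := fun t ht =>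
    mul_pos (one_sub_G_zero_pos hN ht) (Real.rpow_pos_of_pos ht _)
  rw [setIntegral_pos_iff_support_of_nonneg_ae
    ((ae_restrict_iff' measurableSet_Ioi).2 (.of_forall fun t ht => (hpos t ht).le))
    (integrableOn_one_sub_G hN hσ),
    Set.inter_eq_right.2 fun t ht => Function.mem_support.2 (hpos t ht).ne']
  simp

/-- for `N ≥ 1`, `σ ∈ (0,2)`, `h > 0`, the weights `(κ_{σ,h,j})_{j ≠ 0}` are
summable with `∑_{j≠0} κ_{σ,h,j} = h^{-σ} |Γ(-σ/2)|⁻¹ ∫_0^∞ (1 − G(0,t)) t^{-1-σ/2} dt`;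
in particular the sum equals `C_σ h^{-σ}` for a constant `C_σ ∈ (0,∞)` independent of `h`. -/
theorem stmt_3 (N : ℕ) (hN : 1 ≤ N) (σ : ℝ) (hσ : σ ∈ Set.Ioo (0 : ℝ) 2)
    (h : ℝ) (hh : 0 < h) :
    Summable (fun j : {j : Fin N → ℤ // j ≠ 0} => kappa N σ h j.1) ∧
    (∑' j : {j : Fin N → ℤ // j ≠ 0}, kappa N σ h j.1)
      = h ^ (-σ) * |Real.Gamma (-σ / 2)|⁻¹ *
          ∫ t in Set.Ioi (0 : ℝ), (1 - G N 0 t) * t ^ (-1 - σ / 2) ∧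
    ∃ C : ℝ, 0 < C ∧ ∀ h' : ℝ, 0 < h' →
      (∑' j : {j : Fin N → ℤ // j ≠ 0}, kappa N σ h' j.1) = C * h' ^ (-σ) := by
  have hΓ : Real.Gamma (-σ / 2) ≠ 0 := by
    refine Real.Gamma_ne_zero fun m hm => ?_
    have h1 : (0 : ℝ) < m := by linarith [hσ.1]
    have h2 : (m : ℝ) < 1 := by linarith [hσ.2]
    norm_cast at h1 h2
    omega
  refine ⟨(hasSum_kappa hN hσ h).summable, (hasSum_kappa hN hσ h).tsum_eq,
    |Real.Gamma (-σ / 2)|⁻¹ * ∫ t in Set.Ioi (0 : ℝ), (1 - G N 0 t) * t ^ (-1 - σ / 2),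
    mul_pos (inv_pos.2 (abs_pos.2 hΓ)) (integral_one_sub_G_pos hN hσ), fun h' _ => ?_⟩
  rw [(hasSum_kappa hN hσ h').tsum_eq]
  ring
end

section
/- (L∞-stability of the explicit scheme.) Let N ≥ 1 and let (κ_j)_{j∈ℤ^N\{0}} be nonnegative summable weights with total mass S_κ. Let F : ℝ → ℝ satisfy assumption (A1) with constant L_F > 0, let τ > 0 satisfy τ·L_F·S_κ ≤ 1, let u₀ : ℤ^N → ℝ be bounded and f : ℤ^N × ℕ → ℝ be bounded. Define U recursively by U^0_i = u₀(i) and U^{n+1}_i = U^n_i + τ·[F((L U^n)_i) + f^n_i]. Then each U^n is bounded and sup_{i∈ℤ^N} |U^n_i| ≤ sup_i |u₀(i)| + n·τ·( |F(0)| + sup_{i,m} |f^m_i| ) for every n ≥ 0. -/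
/-!
The scheme is monotone under the CFL condition. If `|V| ≤ M`, then
`-(M + V_i) S_κ ≤ (L V)_i ≤ (M - V_i) S_κ`, so the one-sided Lipschitz bound on `F` gives
`V_i + τ F((L V)_i) ≤ V_i + τ L_F S_κ (M - V_i) + τ F(0)`. As `τ L_F S_κ ≤ 1` and `M - V_i ≥ 0`,
the right-hand side is at most `M + τ |F(0)|`, and symmetrically from below. One step therefore
raises the sup bound by at most `τ (|F(0)| + sup |f|)`, and induction on `n` concludes.
-/

open MeasureTheory Real Set

/-- The nonlocal operator `(L V)_i = ∑_{j≠0} (V_{i+j} − V_i) κ_j` on grid functions. -/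
noncomputable def Lop (N : ℕ) (κ : (Fin N → ℤ) → ℝ) (V : (Fin N → ℤ) → ℝ)
    (i : Fin N → ℤ) : ℝ :=
  ∑' j : {j : Fin N → ℤ // j ≠ 0}, (V (i + j.1) - V i) * κ j.1

/-- Summability is proved here because otherwise `Lop` would take the junk value `0`. -/
lemma summable_Lop {N : ℕ} {κ : (Fin N → ℤ) → ℝ} (hκ : ∀ j, 0 ≤ κ j)
    (hsum : Summable fun j : {j : Fin N → ℤ // j ≠ 0} => κ j.1)
    {V : (Fin N → ℤ) → ℝ} {M : ℝ} (hV : ∀ i, |V i| ≤ M) (i : Fin N → ℤ) :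
    Summable fun j : {j : Fin N → ℤ // j ≠ 0} => (V (i + j.1) - V i) * κ j.1 := by
  refine Summable.of_norm_bounded (hsum.mul_left (2 * M)) fun j => ?_
  rw [Real.norm_eq_abs, abs_mul, abs_of_nonneg (hκ j.1)]
  refine mul_le_mul_of_nonneg_right ?_ (hκ j.1)
  have h1 := abs_le.1 (hV (i + j.1))
  have h2 := abs_le.1 (hV i)
  exact abs_le.2 ⟨by linarith, by linarith⟩

lemma Lop_le {N : ℕ} {κ : (Fin N → ℤ) → ℝ} (hκ : ∀ j, 0 ≤ κ j)
    (hsum : Summable fun j : {j : Fin N → ℤ // j ≠ 0} => κ j.1)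
    {V : (Fin N → ℤ) → ℝ} {M : ℝ} (hV : ∀ i, |V i| ≤ M) (i : Fin N → ℤ) :
    Lop N κ V i ≤ (M - V i) * ∑' j : {j : Fin N → ℤ // j ≠ 0}, κ j.1 := by
  rw [← tsum_mul_left]
  refine (summable_Lop hκ hsum hV i).tsum_le_tsum (fun j => ?_) (hsum.mul_left _)
  refine mul_le_mul_of_nonneg_right ?_ (hκ j.1)
  linarith [(abs_le.1 (hV (i + j.1))).2]

lemma neg_Lop_le {N : ℕ} {κ : (Fin N → ℤ) → ℝ} (hκ : ∀ j, 0 ≤ κ j)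
    (hsum : Summable fun j : {j : Fin N → ℤ // j ≠ 0} => κ j.1)
    {V : (Fin N → ℤ) → ℝ} {M : ℝ} (hV : ∀ i, |V i| ≤ M) (i : Fin N → ℤ) :
    -Lop N κ V i ≤ (M + V i) * ∑' j : {j : Fin N → ℤ // j ≠ 0}, κ j.1 := by
  have h := Lop_le (V := fun i => -V i) hκ hsum (fun i => by simpa using hV i) i
  have e : Lop N κ (fun i => -V i) i = -Lop N κ V i := by
    rw [Lop, Lop, ← tsum_neg]
    exact tsum_congr fun j => by ring
  rwa [e, sub_neg_eq_add] at h

/-- L∞-stability of the explicit scheme: under assumption (A1), the CFL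
condition `τ L_F S_κ ≤ 1`, and bounded data `|u₀| ≤ Cu`, `|f| ≤ Cf`, the scheme iterates
satisfy `sup_i |U^n_i| ≤ Cu + n τ (|F(0)| + Cf)`. -/
theorem stmt_11 (N : ℕ) (hN : 1 ≤ N)
    (κ : (Fin N → ℤ) → ℝ) (hκ : ∀ j, 0 ≤ κ j)
    (hsum : Summable fun j : {j : Fin N → ℤ // j ≠ 0} => κ j.1)
    (F : ℝ → ℝ) (LF : ℝ) (hLF : 0 < LF)
    (hF : ∀ l₁ l₂ : ℝ, F l₁ - F l₂ ≤ LF * max (l₁ - l₂) 0)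
    (τ : ℝ) (hτ : 0 < τ)
    (hCFL : τ * LF * (∑' j : {j : Fin N → ℤ // j ≠ 0}, κ j.1) ≤ 1)
    (u₀ : (Fin N → ℤ) → ℝ) (Cu : ℝ) (hCu : ∀ i, |u₀ i| ≤ Cu)
    (f : (Fin N → ℤ) → ℕ → ℝ) (Cf : ℝ) (hCf : ∀ i m, |f i m| ≤ Cf)
    (U : ℕ → (Fin N → ℤ) → ℝ)
    (hU0 : ∀ i, U 0 i = u₀ i)
    (hUrec : ∀ n i, U (n + 1) i = U n i + τ * (F (Lop N κ (U n) i) + f i n)) :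
    ∀ n i, |U n i| ≤ Cu + (n : ℝ) * τ * (|F 0| + Cf) := by
  intro n
  induction n with
  | zero => intro i; simpa [hU0] using hCu i
  | succ n ih =>
    intro i
    set M := Cu + (n : ℝ) * τ * (|F 0| + Cf) with hM
    set S := ∑' j : {j : Fin N → ℤ // j ≠ 0}, κ j.1 with hS
    have hS0 : 0 ≤ S := tsum_nonneg fun j => hκ j.1
    obtain ⟨hlo, hhi⟩ := abs_le.1 (ih i)
    have hp : 0 ≤ M - U n i := by linarith
    have hq : 0 ≤ M + U n i := by linarith
    -- Both bounds on `L U` are nonnegative, so they survive taking positive parts.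
    have hup : F (Lop N κ (U n) i) - F 0 ≤ LF * ((M - U n i) * S) :=
      (hF _ _).trans (mul_le_mul_of_nonneg_left
        (max_le (by simpa using Lop_le hκ hsum ih i) (mul_nonneg hp hS0)) hLF.le)
    have hdn : F 0 - F (Lop N κ (U n) i) ≤ LF * ((M + U n i) * S) :=
      (hF _ _).trans (mul_le_mul_of_nonneg_left
        (max_le (by simpa using neg_Lop_le hκ hsum ih i) (mul_nonneg hq hS0)) hLF.le)
    have hup' := mul_le_mul_of_nonneg_left hup hτ.le
    have hdn' := mul_le_mul_of_nonneg_left hdn hτ.le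
    have hcp := mul_le_mul_of_nonneg_right hCFL hp
    have hcq := mul_le_mul_of_nonneg_right hCFL hq
    obtain ⟨hf1, hf2⟩ := abs_le.1 (hCf i n)
    have hf1' := mul_le_mul_of_nonneg_left hf1 hτ.le
    have hf2' := mul_le_mul_of_nonneg_left hf2 hτ.le
    have hF1 := mul_le_mul_of_nonneg_left (neg_abs_le (F 0)) hτ.le
    have hF2 := mul_le_mul_of_nonneg_left (le_abs_self (F 0)) hτ.le
    have hgoal : Cu + ((n + 1 : ℕ) : ℝ) * τ * (|F 0| + Cf) = M + τ * (|F 0| + Cf) := by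
      rw [hM]; push_cast; ring
    rw [hgoal, hUrec, abs_le]
    constructor <;> linarith
end
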